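/- Assume σ is essential and A is generated as a ring by φ(R) ∪ {X, Y}. Let M be a simple weight A-module. Then the action of Y on M is either injective or locally nilpotent (i.e., for every v ∈ M there exists k ∈ ℤ_{≥0} with Y^k•v = 0). -/

import Mathlib

variable {R A M : Type*}

/-- Weight space of an `A`-module `M` (viewed as `R`-module via `φ`) at an ideal `m`:
`M_m = {v ∈ M : r • v = 0 for all r ∈ m}`. -/
def weightSpace [CommRing R] [Ring A] [AddCommGroup M] [Module A M]
    (φ : R →+* A) (m : Ideal R) : AddSubgroup M where
  carrier := {v | ∀ r ∈ m, φ r • v = 0}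
  zero_mem' := fun r _ => smul_zero (φ r)
  add_mem' := by
    intro a b ha hb r hr
    rw [smul_add, ha r hr, hb r hr, add_zero]
  neg_mem' := by
    intro a ha r hr
    rw [smul_neg, ha r hr, neg_zero]

/-- `M` is a weight module: it is the internal direct sum of its weight spaces
over all maximal ideals of `R`. -/
def IsWeightModule [CommRing R] [Ring A] [AddCommGroup M] [Module A M]
    (φ : R →+* A) : Prop :=
  (⨆ m : {m : Ideal R // m.IsMaximal}, weightSpace (M := M) φ m.1) = ⊤ ∧
  iSupIndep (fun m : {m : Ideal R // m.IsMaximal} => weightSpace (M := M) φ m.1)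

/-- `σ` is an essential endomorphism: for every maximal ideal `m` the map
`r ↦ σ(r) + m` from `R` to `R/m` is surjective. -/
def IsEssential [CommRing R] (σ : R →+* R) : Prop :=
  ∀ m : Ideal R, m.IsMaximal →
    Function.Surjective (fun r : R => Ideal.Quotient.mk m (σ r))

/-!
For each maximal ideal `m`, `Y` maps `M_m` into the weight space at `σ⁻¹(m)`, which is again
maximal because `σ` is essential. The vectors killed by a power of `Y` form a subgroup, nonzero as
soon as `Y` is not injective. It is stable under `Y`, and also under `X` (since `Y * X = φ t`)
provided every kernel `ker Y ^ k` is stable under `R`; simplicity then forces it to be all of `M`.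

If `σ(t) v = 0` implies `Y v = 0` on weight vectors, then `ker Y = ker σ(t)` on `M`, and every
`ker Y ^ k` is the kernel of an element of `R`. Otherwise some weight vector `v ∈ M_m` has
`X Y v = σ(t) v = 0` and `Y v ≠ 0`, so `M` is spanned over `R` by the `Y ^ k v` with `k ≥ 1`.
Hence `m` is periodic under `σ⁻¹` and all weights lie in its cycle, where `σ⁻¹` is injective. By
the Chinese remainder theorem, each `r ∈ R` then acts on a given vector as some `σ(s)`, and
`Y σ(s) = s Y` moves it past the powers of `Y`.
-/

section EssentialEndomorphism

variable [CommRing R] {σ : R →+* R}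

theorem IsEssential.exists_map_sub_mem (hess : IsEssential σ) {m : Ideal R} (hm : m.IsMaximal)
    (r : R) : ∃ s, σ s - r ∈ m := by
  obtain ⟨s, hs⟩ := hess m hm (Ideal.Quotient.mk m r)
  exact ⟨s, Ideal.Quotient.eq.1 hs⟩

theorem IsEssential.isMaximal_comap (hess : IsEssential σ) {m : Ideal R} (hm : m.IsMaximal) :
    (m.comap σ).IsMaximal := by
  let _ := Ideal.Quotient.field m
  have hker : RingHom.ker ((Ideal.Quotient.mk m).comp σ) = m.comap σ := by
    rw [← RingHom.comap_ker, Ideal.mk_ker]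
  exact hker ▸ RingHom.ker_isMaximal_of_surjective _ (hess m hm)

/-- The map `m ↦ σ⁻¹(m)` that an essential endomorphism `σ` induces on maximal ideals; `Y` sends
vectors of weight `m` to vectors of weight `σ⁻¹(m)`. -/
def IsEssential.comapMaximal (hess : IsEssential σ) (m : {m : Ideal R // m.IsMaximal}) :
    {m : Ideal R // m.IsMaximal} :=
  ⟨m.1.comap σ, hess.isMaximal_comap m.2⟩

theorem IsEssential.exists_forall_map_sub_mem (hess : IsEssential σ)
    {F : Finset {m : Ideal R // m.IsMaximal}} (hF : Set.InjOn hess.comapMaximal F) (r : R) :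
    ∃ s, ∀ m ∈ F, σ s - r ∈ m.1 := by
  choose lift hlift using fun m : F => hess.exists_map_sub_mem m.1.2 r
  have hcoprime : Pairwise (Function.onFun IsCoprime fun m : F => (hess.comapMaximal m).1) := by
    intro m n hmn
    have := (hess.comapMaximal m).2
    have := (hess.comapMaximal n).2
    exact Ideal.isCoprime_of_isMaximal fun h => hmn (Subtype.ext (hF m.2 n.2 (Subtype.ext h)))
  obtain ⟨s, hs⟩ := Ideal.exists_forall_sub_mem_ideal hcoprime lift
  refine ⟨s, fun m hm => ?_⟩
  have hσ : σ (s - lift ⟨m, hm⟩) ∈ m.1 := hs ⟨m, hm⟩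
  simpa only [map_sub, sub_add_sub_cancel] using m.1.add_mem hσ (hlift ⟨m, hm⟩)

end EssentialEndomorphism

section AdditiveSubgroups

variable [AddCommGroup M] {ι : Type*} {N : ι → AddSubgroup M}

theorem exists_finsupp_sum_eq_of_mem_iSup {v : M} (hv : v ∈ ⨆ i, N i) :
    ∃ f : ι →₀ M, (∀ i, f i ∈ N i) ∧ (f.sum fun _ x => x) = v := by
  refine (Submodule.mem_iSup_iff_exists_finsupp (fun i => (N i).toIntSubmodule) v).1 ?_
  rwa [← OrderIso.map_iSup]

theorem eq_zero_of_sum_eq_zero_of_iSupIndep (hN : iSupIndep N) {s : Finset ι} {f : ι → M}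
    (hf : ∀ i ∈ s, f i ∈ N i) (hsum : ∑ i ∈ s, f i = 0) : ∀ i ∈ s, f i = 0 :=
  (iSupIndep_iff_finsetSum_eq_zero_imp_eq_zero fun i => (N i).toIntSubmodule).1
    ((iSupIndep_map_orderIso_iff AddSubgroup.toIntSubmodule).2 hN) s f hf hsum

end AdditiveSubgroups

section Stability

variable [Ring A] [AddCommGroup M] [Module A M]

theorem addSubgroup_eq_top_of_smul_mem [IsSimpleModule A M] {S : Set A}
    (hS : Subring.closure S = ⊤) {N : AddSubgroup M} (hN : N ≠ ⊥)
    (hSN : ∀ a ∈ S, ∀ v ∈ N, a • v ∈ N) : N = ⊤ := by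
  have hstable (a : A) : ∀ v ∈ N, a • v ∈ N := by
    have ha : a ∈ Subring.closure S := hS ▸ Subring.mem_top a
    induction ha using Subring.closure_induction with
    | mem a ha => exact hSN a ha
    | zero => exact fun v _ => (zero_smul A v).symm ▸ N.zero_mem
    | one => exact fun v hv => (one_smul A v).symm ▸ hv
    | add a b _ _ ha hb => exact fun v hv => add_smul a b v ▸ N.add_mem (ha v hv) (hb v hv)
    | neg a _ ha => exact fun v hv => neg_smul a v ▸ N.neg_mem (ha v hv)
    | mul a b _ _ ha hb => exact fun v hv => mul_smul a b v ▸ ha _ (hb v hv)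
  let P : Submodule A M := { N with smul_mem' := fun a v hv => hstable a v hv }
  have hP : P.toAddSubgroup = N := rfl
  rcases eq_bot_or_eq_top P with h | h
  · exact absurd (by rw [← hP, h, Submodule.bot_toAddSubgroup]) hN
  · rw [← hP, h, Submodule.top_toAddSubgroup]

theorem smul_mem_closure_of_forall_smul_mem {s : Set M} {a : A}
    (hs : ∀ v ∈ s, a • v ∈ AddSubgroup.closure s) :
    ∀ v ∈ AddSubgroup.closure s, a • v ∈ AddSubgroup.closure s :=
  (AddSubgroup.closure_le
    ((AddSubgroup.closure s).comap (DistribSMul.toAddMonoidHom M a))).2 hs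

/-- The vectors killed by some power of `Y`; `Y` is locally nilpotent on `M` iff this is `⊤`. -/
def nilpotentVectors (M : Type*) [AddCommGroup M] [Module A M] (Y : A) : AddSubgroup M where
  carrier := {v | ∃ k : ℕ, Y ^ k • v = 0}
  zero_mem' := ⟨0, smul_zero _⟩
  add_mem' := by
    rintro u v ⟨k, hk⟩ ⟨l, hl⟩
    refine ⟨k + l, ?_⟩
    rw [smul_add, pow_add, mul_smul _ _ v, hl, (Commute.pow_pow_self Y k l).eq, mul_smul, hk,
      smul_zero, smul_zero, add_zero]
  neg_mem' := by
    rintro v ⟨k, hk⟩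
    exact ⟨k, by rw [smul_neg, hk, neg_zero]⟩

theorem nilpotentVectors_ne_bot {Y : A} (hY : ¬ Function.Injective fun v : M => Y • v) :
    nilpotentVectors M Y ≠ ⊥ := by
  contrapose! hY
  refine (injective_iff_map_eq_zero (DistribSMul.toAddMonoidHom M Y)).2 fun v hv => ?_
  have hmem : v ∈ nilpotentVectors M Y := ⟨1, by rwa [pow_one]⟩
  rwa [hY, AddSubgroup.mem_bot] at hmem

theorem injective_or_locally_nilpotent_of_ker_pow_stable [CommRing R] [IsSimpleModule A M]
    {φ : R →+* A} {t : R} {X Y : A} (hYX : Y * X = φ t)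
    (hgen : Subring.closure (Set.range φ ∪ {X, Y}) = ⊤)
    (hker : ∀ (k : ℕ) (v : M) (r : R), Y ^ k • v = 0 → Y ^ k • φ r • v = 0) :
    Function.Injective (fun v : M => Y • v) ∨ ∀ v : M, ∃ k : ℕ, Y ^ k • v = 0 := by
  refine or_iff_not_imp_left.2 fun hinj v => ?_
  suffices htop : nilpotentVectors M Y = ⊤ from htop.ge (AddSubgroup.mem_top v)
  refine addSubgroup_eq_top_of_smul_mem hgen (nilpotentVectors_ne_bot hinj) ?_
  rintro _ (⟨r, rfl⟩ | rfl | rfl) v ⟨k, hk⟩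
  · exact ⟨k, hker k v r hk⟩
  · refine ⟨k + 1, ?_⟩
    rw [pow_succ, mul_smul, smul_smul Y, hYX, hker k v t hk]
  · refine ⟨k, ?_⟩
    rw [smul_smul, ← pow_succ, pow_succ', mul_smul, hk, smul_zero]

end Stability

section WeightSpaces

variable [CommRing R] [Ring A] [AddCommGroup M] [Module A M] {φ : R →+* A} {m : Ideal R} {v : M}

theorem smul_mem_weightSpace (hv : v ∈ weightSpace φ m) (r : R) : φ r • v ∈ weightSpace φ m := by
  intro s hs
  rw [smul_smul, ← map_mul]
  exact hv _ (m.mul_mem_right r hs)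

theorem smul_eq_smul_of_sub_mem (hv : v ∈ weightSpace φ m) {r s : R} (hrs : r - s ∈ m) :
    φ r • v = φ s • v := by
  rw [← sub_eq_zero, ← sub_smul, ← map_sub]
  exact hv _ hrs

theorem IsWeightModule.smul_eq_zero_of_weight_vectors (hw : IsWeightModule (M := M) φ) {r : R}
    {a : A} (hra : ∀ m : Ideal R, m.IsMaximal → ∀ v ∈ weightSpace (M := M) φ m,
      φ r • v = 0 → a • v = 0) (hv : φ r • v = 0) : a • v = 0 := by
  obtain ⟨f, hf, rfl⟩ := exists_finsupp_sum_eq_of_mem_iSup (hw.1.ge (AddSubgroup.mem_top v))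
  rw [Finsupp.sum, Finset.smul_sum] at hv ⊢
  have hcomp := eq_zero_of_sum_eq_zero_of_iSupIndep hw.2
    (fun m _ => smul_mem_weightSpace (hf m) r) hv
  exact Finset.sum_eq_zero fun m hm => hra m.1 m.2 _ (hf m) (hcomp m hm)

theorem IsEssential.exists_smul_eq_smul_map {σ : R →+* R} (hess : IsEssential σ)
    {S : Set {m : Ideal R // m.IsMaximal}} (hS : Set.InjOn hess.comapMaximal S)
    (hv : v ∈ ⨆ m ∈ S, weightSpace φ m.1) (r : R) : ∃ s, φ r • v = φ (σ s) • v := by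
  classical
  rw [iSup_subtype'] at hv
  obtain ⟨f, hf, rfl⟩ := exists_finsupp_sum_eq_of_mem_iSup hv
  have hsupp : (f.support.map (Function.Embedding.subtype (· ∈ S)) : Set _) ⊆ S := by
    simp
  obtain ⟨s, hs⟩ := hess.exists_forall_map_sub_mem (hS.mono hsupp) r
  refine ⟨s, ?_⟩
  rw [Finsupp.sum, Finset.smul_sum, Finset.smul_sum]
  refine Finset.sum_congr rfl fun m hm => (smul_eq_smul_of_sub_mem (hf m) ?_).symm
  exact hs m (Finset.mem_map_of_mem _ hm)

variable {σ : R →+* R} {Y : A}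

theorem smul_mem_weightSpace_comap (hrY : ∀ r, φ r * Y = Y * φ (σ r))
    (hv : v ∈ weightSpace φ m) : Y • v ∈ weightSpace φ (m.comap σ) := by
  intro r hr
  rw [smul_smul, hrY, mul_smul, hv _ hr, smul_zero]

theorem pow_smul_mem_weightSpace_iterate (hess : IsEssential σ)
    (hrY : ∀ r, φ r * Y = Y * φ (σ r)) {m : {m : Ideal R // m.IsMaximal}}
    (hv : v ∈ weightSpace φ m.1) (k : ℕ) :
    Y ^ k • v ∈ weightSpace φ (hess.comapMaximal^[k] m).1 := by
  induction k with
  | zero => rwa [pow_zero, one_smul]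
  | succ k ih =>
    rw [pow_succ', mul_smul, Function.iterate_succ_apply']
    exact smul_mem_weightSpace_comap hrY ih

end WeightSpaces

section HighestWeight

variable [CommRing R] [Ring A] [AddCommGroup M] [Module A M]
  {φ : R →+* A} {σ : R →+* R} {t : R} {X Y : A} {w : M}

/-- The `R`-submodule `∑ₖ R Yᵏ w` of `M`, encoded as an additive subgroup because `R` acts on `M`
only through `φ`. If `σ` is essential and `w` is a weight vector with `X w = 0`, it is the
`A`-submodule generated by `w`. -/
def powSpan (φ : R →+* A) (Y : A) (w : M) : AddSubgroup M :=
  AddSubgroup.closure (Set.range fun p : R × ℕ => φ p.1 • Y ^ p.2 • w)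

theorem smul_pow_smul_mem_powSpan (r : R) (k : ℕ) : φ r • Y ^ k • w ∈ powSpan φ Y w :=
  AddSubgroup.subset_closure ⟨(r, k), rfl⟩

theorem self_mem_powSpan : w ∈ powSpan φ Y w := by
  simpa only [map_one, pow_zero, one_smul] using smul_pow_smul_mem_powSpan (φ := φ) (Y := Y) 1 0

theorem map_smul_mem_powSpan (r : R) : ∀ u ∈ powSpan φ Y w, φ r • u ∈ powSpan φ Y w := by
  refine smul_mem_closure_of_forall_smul_mem ?_
  rintro _ ⟨⟨s, k⟩, rfl⟩
  rw [smul_smul, ← map_mul]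
  exact smul_pow_smul_mem_powSpan (r * s) k

theorem lowering_smul_mem_powSpan (hess : IsEssential σ) (hrY : ∀ r, φ r * Y = Y * φ (σ r))
    {m : {m : Ideal R // m.IsMaximal}} (hwm : w ∈ weightSpace φ m.1) :
    ∀ u ∈ powSpan φ Y w, Y • u ∈ powSpan φ Y w := by
  refine smul_mem_closure_of_forall_smul_mem ?_
  rintro _ ⟨⟨r, k⟩, rfl⟩
  obtain ⟨s, hs⟩ := hess.exists_map_sub_mem (hess.comapMaximal^[k] m).2 r
  have hYr : Y • φ r • Y ^ k • w = φ s • Y ^ (k + 1) • w := by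
    rw [← smul_eq_smul_of_sub_mem (pow_smul_mem_weightSpace_iterate hess hrY hwm k) hs,
      smul_smul, ← hrY, mul_smul, smul_smul Y, ← pow_succ']
  exact hYr ▸ smul_pow_smul_mem_powSpan s (k + 1)

theorem raising_smul_mem_powSpan (hXY : X * Y = φ (σ t)) (hXr : ∀ r, X * φ r = φ (σ r) * X)
    (hXw : X • w = 0) : ∀ u ∈ powSpan φ Y w, X • u ∈ powSpan φ Y w := by
  refine smul_mem_closure_of_forall_smul_mem ?_
  rintro _ ⟨⟨r, k⟩, rfl⟩
  rw [smul_smul, hXr, mul_smul]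
  cases k with
  | zero =>
    rw [pow_zero, one_smul, hXw, smul_zero]
    exact zero_mem _
  | succ k =>
    rw [pow_succ', mul_smul, smul_smul X, hXY, smul_smul, ← map_mul]
    exact smul_pow_smul_mem_powSpan (σ r * σ t) k

theorem iSup_weightSpace_iterate_eq_top [IsSimpleModule A M] (hXY : X * Y = φ (σ t))
    (hXr : ∀ r, X * φ r = φ (σ r) * X) (hrY : ∀ r, φ r * Y = Y * φ (σ r))
    (hgen : Subring.closure (Set.range φ ∪ {X, Y}) = ⊤) (hess : IsEssential σ)
    {m : {m : Ideal R // m.IsMaximal}} (hwm : w ∈ weightSpace φ m.1) (hw0 : w ≠ 0)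
    (hXw : X • w = 0) :
    ⨆ n ∈ Set.range (hess.comapMaximal^[·] m), weightSpace (M := M) φ n.1 = ⊤ := by
  have hne : powSpan φ Y w ≠ ⊥ := fun h => hw0 ((AddSubgroup.mem_bot).1 (h ▸ self_mem_powSpan))
  have htop : powSpan φ Y w = ⊤ := by
    refine addSubgroup_eq_top_of_smul_mem hgen hne ?_
    rintro _ (⟨r, rfl⟩ | rfl | rfl)
    · exact map_smul_mem_powSpan r
    · exact raising_smul_mem_powSpan hXY hXr hXw
    · exact lowering_smul_mem_powSpan hess hrY hwm
  rw [eq_top_iff, ← htop, iSup_range, powSpan, AddSubgroup.closure_le]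
  rintro _ ⟨⟨r, k⟩, rfl⟩
  exact AddSubgroup.mem_iSup_of_mem k
    (smul_mem_weightSpace (pow_smul_mem_weightSpace_iterate hess hrY hwm k) r)

theorem iSup_weightSpace_periodicPts_eq_top [IsSimpleModule A M] (hXY : X * Y = φ (σ t))
    (hXr : ∀ r, X * φ r = φ (σ r) * X) (hrY : ∀ r, φ r * Y = Y * φ (σ r))
    (hgen : Subring.closure (Set.range φ ∪ {X, Y}) = ⊤) (hess : IsEssential σ)
    (hw : IsWeightModule (M := M) φ) {m : {m : Ideal R // m.IsMaximal}} {v : M}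
    (hv : v ∈ weightSpace φ m.1) (htv : φ (σ t) • v = 0) (hYv : Y • v ≠ 0) :
    ⨆ n ∈ Function.periodicPts hess.comapMaximal, weightSpace (M := M) φ n.1 = ⊤ := by
  have hXYv : X • Y • v = 0 := by rw [smul_smul, hXY, htv]
  have hYm : Y • v ∈ weightSpace φ (hess.comapMaximal m).1 := smul_mem_weightSpace_comap hrY hv
  have htop := iSup_weightSpace_iterate_eq_top hXY hXr hrY hgen hess hYm hYv hXYv
  have hm : weightSpace (M := M) φ m.1 ≠ ⊥ := by
    intro h
    rw [h, AddSubgroup.mem_bot] at hv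
    exact hYv (by rw [hv, smul_zero])
  obtain ⟨p, hp⟩ := hw.2.mem_of_biSup_eq_top htop hm
  have hper : m ∈ Function.periodicPts hess.comapMaximal :=
    Function.mk_mem_periodicPts p.succ_pos hp
  have hmaps := (Function.bijOn_periodicPts hess.comapMaximal).mapsTo
  refine top_le_iff.1 (htop.ge.trans (biSup_mono ?_))
  rintro _ ⟨k, rfl⟩
  exact hmaps.iterate k (hmaps hper)

end HighestWeight

section KernelsOfPowers

variable [CommRing R] [Ring A] [AddCommGroup M] [Module A M]
  {φ : R →+* A} {σ : R →+* R} {Y : A}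

theorem exists_pow_smul_eq_zero_iff (hrY : ∀ r, φ r * Y = Y * φ (σ r)) {c : R}
    (hc : ∀ v : M, Y • v = 0 ↔ φ c • v = 0) (k : ℕ) :
    ∃ d, ∀ v : M, Y ^ k • v = 0 ↔ φ d • v = 0 := by
  induction k with
  | zero => exact ⟨1, fun v => by rw [pow_zero, map_one]⟩
  | succ k ih =>
    obtain ⟨d, hd⟩ := ih
    refine ⟨c * σ d, fun v => ?_⟩
    rw [pow_succ, mul_smul, hd, smul_smul, hrY, mul_smul, hc, map_mul, mul_smul]

theorem pow_smul_map_smul_eq_zero_of_ker_eq (hrY : ∀ r, φ r * Y = Y * φ (σ r)) {c : R}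
    (hc : ∀ v : M, Y • v = 0 ↔ φ c • v = 0) (k : ℕ) (v : M) (r : R) (hv : Y ^ k • v = 0) :
    Y ^ k • φ r • v = 0 := by
  obtain ⟨d, hd⟩ := exists_pow_smul_eq_zero_iff hrY hc k
  rw [hd] at hv ⊢
  rw [smul_smul, ← map_mul, mul_comm, map_mul, mul_smul, hv, smul_zero]

theorem pow_smul_map_smul_eq_zero_of_exists_map (hrY : ∀ r, φ r * Y = Y * φ (σ r))
    (hσ : ∀ (v : M) (r : R), ∃ s, φ r • v = φ (σ s) • v) (k : ℕ) (v : M) (r : R)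
    (hv : Y ^ k • v = 0) : Y ^ k • φ r • v = 0 := by
  induction k generalizing v r with
  | zero =>
    rw [pow_zero, one_smul] at hv ⊢
    rw [hv, smul_zero]
  | succ k ih =>
    obtain ⟨s, hs⟩ := hσ v r
    rw [pow_succ, mul_smul] at hv ⊢
    rw [hs, smul_smul Y, ← hrY, mul_smul]
    exact ih (Y • v) s hv

end KernelsOfPowers

theorem stmt_14 [CommRing R] [Ring A] [AddCommGroup M] [Module A M]
    (φ : R →+* A) (σ : R →+* R) (t : R) (X Y : A)
    (hYX : Y * X = φ t) (hXY : X * Y = φ (σ t))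
    (hXr : ∀ r : R, X * φ r = φ (σ r) * X)
    (hrY : ∀ r : R, φ r * Y = Y * φ (σ r))
    (hess : IsEssential σ)
    (hgen : Subring.closure (Set.range φ ∪ {X, Y}) = ⊤)
    (hw : IsWeightModule (M := M) φ)
    (hsimple : IsSimpleModule A M) :
    Function.Injective (fun v : M => Y • v) ∨ ∀ v : M, ∃ k : ℕ, Y ^ k • v = 0 := by
  refine injective_or_locally_nilpotent_of_ker_pow_stable hYX hgen ?_
  by_cases hbreak : ∀ m : Ideal R, m.IsMaximal → ∀ v ∈ weightSpace (M := M) φ m,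
      φ (σ t) • v = 0 → Y • v = 0
  · have hker (v : M) : Y • v = 0 ↔ φ (σ t) • v = 0 :=
      ⟨fun h => by rw [← hXY, mul_smul, h, smul_zero], hw.smul_eq_zero_of_weight_vectors hbreak⟩
    exact pow_smul_map_smul_eq_zero_of_ker_eq hrY hker
  · push Not at hbreak
    obtain ⟨m, hm, v, hv, htv, hYv⟩ := hbreak
    have htop := iSup_weightSpace_periodicPts_eq_top hXY hXr hrY hgen hess hw
      (m := ⟨m, hm⟩) hv htv hYv
    have hinj := (Function.bijOn_periodicPts hess.comapMaximal).injOn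
    exact pow_smul_map_smul_eq_zero_of_exists_map hrY fun u =>
      hess.exists_smul_eq_smul_map hinj (htop.ge (AddSubgroup.mem_top u))
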